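/- arXiv:1201.0484 — 2 statements merged into one kernel-verified Lean document; each statement's English description precedes it below -/
import Mathlib

section
/- Let S be a set without tangents of size 10 in PG(2,5). Then either S is the trivial set without tangents (there exist two distinct lines L1, L2 of PG(2,5) such that S is the set of all points on L1 or L2 different from L1 ∩ L2), or S is the set of interior points of some irreducible conic of PG(2,5). -/
/-!
`PG(2,F)`: points are the 1-dimensional subspaces of `F^3` (modelled as the
projectivization of `Fin 3 → F`), lines are the 2-dimensional subspaces.
-/

variable {F : Type*} [Field F]

/-- The points of `PG(2,F)`: 1-dimensional subspaces of `F^3`. -/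
abbrev PGPoint (F : Type*) [Field F] := Projectivization F (Fin 3 → F)

/-- A line of `PG(2,F)` is a 2-dimensional subspace of `F^3`. -/
def IsProjLine (F : Type*) [Field F] (L : Submodule F (Fin 3 → F)) : Prop :=
  Module.finrank F L = 2

/-- The set of projective points lying on the subspace `L`. -/
def pointsOn (L : Submodule F (Fin 3 → F)) : Set (PGPoint F) :=
  {P | P.submodule ≤ L}

/-- `S` is a set without tangents: no line of `PG(2,F)` meets `S` in exactly one point. -/
def NoTangents (S : Set (PGPoint F)) : Prop :=
  ∀ L : Submodule F (Fin 3 → F), IsProjLine F L →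
    ¬ (∃! P : PGPoint F, P ∈ S ∩ pointsOn L)

/-- The trivial set without tangents: all points on one of two distinct lines,
different from their intersection point. -/
def IsTrivialSWT (S : Set (PGPoint F)) : Prop :=
  ∃ L1 L2 : Submodule F (Fin 3 → F), IsProjLine F L1 ∧ IsProjLine F L2 ∧ L1 ≠ L2 ∧
    S = (pointsOn L1 ∪ pointsOn L2) \ (pointsOn L1 ∩ pointsOn L2)

/-- The conic (zero set in `PG(2,F)`) of a quadratic form `Q` on `F^3`. -/
def conicSet (Q : QuadraticForm F (Fin 3 → F)) : Set (PGPoint F) :=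
  {P | ∀ v ∈ P.submodule, Q v = 0}

/-- Nondegeneracy of a quadratic form (via its polar form). -/
def NondegQF (Q : QuadraticForm F (Fin 3 → F)) : Prop :=
  ∀ v : Fin 3 → F, (∀ w, QuadraticMap.polar Q v w = 0) → v = 0

/-- A tangent line of a point set `C`: a line meeting `C` in exactly one point. -/
def IsTangentLine (C : Set (PGPoint F)) (L : Submodule F (Fin 3 → F)) : Prop :=
  IsProjLine F L ∧ ∃! P : PGPoint F, P ∈ C ∩ pointsOn L

/-- An external line of a point set `C`: a line meeting `C` in no point. -/
def IsExternalLine (C : Set (PGPoint F)) (L : Submodule F (Fin 3 → F)) : Prop :=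
  IsProjLine F L ∧ C ∩ pointsOn L = ∅

/-- An exterior point of `C`: a point not on `C` lying on some tangent line of `C`. -/
def IsExteriorPoint (C : Set (PGPoint F)) (P : PGPoint F) : Prop :=
  P ∉ C ∧ ∃ L : Submodule F (Fin 3 → F), IsTangentLine C L ∧ P ∈ pointsOn L

/-- An interior point of `C`: a point neither on `C` nor exterior to `C`. -/
def IsInteriorPoint (C : Set (PGPoint F)) (P : PGPoint F) : Prop :=
  P ∉ C ∧ ¬ IsExteriorPoint C P

/-- An exterior set of `C`: every line containing at least two of its points is
an external line of `C`. -/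
def IsExteriorSet (C E : Set (PGPoint F)) : Prop :=
  ∀ L : Submodule F (Fin 3 → F), IsProjLine F L →
    (∃ P1 ∈ E ∩ pointsOn L, ∃ P2 ∈ E ∩ pointsOn L, P1 ≠ P2) → IsExternalLine C L

/-!
If some line carries five points of a set `S` without tangents of size 10, counting on the lines
through a point of `S` gives a second such line, and `S` is trivial. Otherwise double counting shows
that every line carries 0, 2 or 3 points, that exactly six lines miss `S`, that each point off `S`
lies on one of these six lines, and that no point lies on three of them. The external lines thus
form an arc of `q + 1 = 6` points of the dual plane, which is a conic by Segre's theorem. They are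
the tangents of the dual conic, whose interior points are the points on none of them, that is, the
points of `S`.

In Segre's theorem the tangents of the arc at its points are scaled so that `f i (v j) = f j (v i)`;
they are then the values at the points of a symmetric bilinear form, which defines the conic.
-/

open Module Finset

section SecantCounting

open Configuration Configuration.ProjectivePlane

variable {P L : Type*} [Membership P L] [∀ (p : P) (l : L), Decidable (p ∈ l)]

/-- The number of points of `S` on the line `l`: the line is an `n`-secant of `S` if this is `n`. -/
def secantCard (S : Finset P) (l : L) : ℕ := #{p ∈ S | p ∈ l}

theorem sum_secantCard_mul [Fintype L] (S : Finset P) (g : L → ℕ) :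
    ∑ l, secantCard S l * g l = ∑ p ∈ S, ∑ l with p ∈ l, g l := by
  simp_rw [secantCard, ← smul_eq_mul, ← sum_const]
  exact sum_comm' (by simp [and_comm])

theorem secantCard_eq_secantCard_erase_add_one [DecidableEq P] {S : Finset P} {p : P} {l : L}
    (hp : p ∈ S) (hl : p ∈ l) : secantCard S l = secantCard (S.erase p) l + 1 := by
  rw [secantCard, secantCard, filter_erase, card_erase_add_one (mem_filter.2 ⟨hp, hl⟩)]

theorem two_le_secantCard {S : Finset P} (hS : ∀ l : L, secantCard S l ≠ 1) {p : P} {l : L}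
    (hp : p ∈ S) (hl : p ∈ l) : 2 ≤ secantCard S l := by
  have hpos : 0 < secantCard S l := card_pos.2 ⟨p, mem_filter.2 ⟨hp, hl⟩⟩
  have := hS l
  omega

variable [ProjectivePlane P L]

theorem card_line [Fintype P] [Finite L] (l : L) : #{p : P | p ∈ l} = order P L + 1 := by
  rw [← pointCount_eq P l, pointCount, Nat.card_eq_fintype_card, Fintype.card_subtype]

section Fintype

variable [Fintype L]

theorem sum_pencil_secantCard_of_notMem {S : Finset P} {p : P} (hp : p ∉ S) :
    ∑ l : L with p ∈ l, secantCard S l = #S := by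
  rw [card_eq_sum_ones]
  refine (sum_card_bipartiteAbove_eq_sum_card_bipartiteBelow fun q (l : L) => q ∈ l).symm.trans
    (sum_congr rfl fun q hq => card_eq_one_iff_existsUnique.2 ?_)
  simpa [bipartiteAbove] using HasLines.existsUnique_line P L p q (ne_of_mem_of_not_mem hq hp).symm

variable [Finite P]

theorem card_pencil (p : P) : #{l : L | p ∈ l} = order P L + 1 := by
  rw [← lineCount_eq L p, lineCount, Nat.card_eq_fintype_card, Fintype.card_subtype]

theorem sum_pencil_secantCard_of_mem {S : Finset P} {p : P} (hp : p ∈ S) :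
    ∑ l : L with p ∈ l, secantCard S l = #S + order P L := by
  classical
  calc ∑ l : L with p ∈ l, secantCard S l
      = ∑ l : L with p ∈ l, (secantCard (S.erase p) l + 1) :=
        sum_congr rfl fun l hl => secantCard_eq_secantCard_erase_add_one hp (by simpa using hl)
    _ = #(S.erase p) + (order P L + 1) := by
        rw [sum_add_distrib, sum_pencil_secantCard_of_notMem (notMem_erase p S),
          ← card_eq_sum_ones, card_pencil]
    _ = #S + order P L := by rw [← card_erase_add_one hp]; ring

theorem sum_secantCard (S : Finset P) :
    ∑ l : L, secantCard S l = #S * (order P L + 1) := by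
  have h := sum_secantCard_mul (L := L) S fun _ => 1
  simpa only [mul_one, ← card_eq_sum_ones, card_pencil, sum_const, smul_eq_mul] using h

theorem sum_secantCard_sq (S : Finset P) :
    ∑ l : L, secantCard S l ^ 2 = #S * (#S + order P L) := by
  simp_rw [sq]
  rw [sum_secantCard_mul, sum_congr rfl fun p hp => sum_pencil_secantCard_of_mem hp, sum_const,
    smul_eq_mul]

theorem card_add_mul_card_external_le {S : Finset P} {k : ℕ} (hk : ∀ l : L, secantCard S l ≤ k)
    {p : P} (hp : p ∉ S) :
    #S + k * #{l : L | p ∈ l ∧ secantCard S l = 0} ≤ k * (order P L + 1) := by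
  calc #S + k * #{l : L | p ∈ l ∧ secantCard S l = 0}
      = ∑ l : L with p ∈ l, (secantCard S l + k * if secantCard S l = 0 then 1 else 0) := by
        rw [sum_add_distrib, sum_pencil_secantCard_of_notMem hp, ← mul_sum, sum_boole,
          filter_filter, Nat.cast_id]
    _ ≤ ∑ l : L with p ∈ l, k := sum_le_sum fun l _ => by
        have := hk l
        split_ifs <;> omega
    _ = k * (order P L + 1) := by rw [sum_const, card_pencil, smul_eq_mul, mul_comm]

-- `(n - 2) * (n - 3)` is `6` at `n = 0` and vanishes at `n = 2` and `n = 3`.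
theorem card_external_eq_six {S : Finset P} (hS : ∀ l : L, secantCard S l ≠ 1) (hcard : #S = 10)
    (horder : order P L = 5) (hle : ∀ l : L, secantCard S l ≤ 3) :
    #{l : L | secantCard S l = 0} = 6 := by
  have hsum : ∑ l : L, (6 * (if secantCard S l = 0 then 1 else 0) + 5 * secantCard S l) =
      ∑ l : L, (secantCard S l ^ 2 + 6) := sum_congr rfl fun l _ => by
    have := hS l
    have := hle l
    interval_cases h : secantCard S l <;> simp_all
  rw [sum_add_distrib, sum_add_distrib, ← mul_sum, ← mul_sum, sum_boole, sum_secantCard,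
    sum_secantCard_sq, sum_const, card_univ, card_lines P L, hcard, horder, Nat.cast_id,
    smul_eq_mul] at hsum
  omega

end Fintype

variable [Finite P] [Finite L]

theorem sum_secantCard_add_le {S : Finset P} (hS : ∀ l : L, secantCard S l ≠ 1) {p : P}
    (hp : p ∈ S) {A : Finset L} (hA : ∀ l ∈ A, p ∈ l) :
    ∑ l ∈ A, secantCard S l + (order P L + 2) ≤ #S + 2 * #A := by
  classical
  have := Fintype.ofFinite L
  have hsub : A ⊆ ({l : L | p ∈ l} : Finset L) := fun l hl => by simpa using hA l hl
  have hsum := sum_sdiff (f := fun l => secantCard S l) hsub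
  have hcard := card_sdiff_add_card_eq_card hsub
  have htwo := card_nsmul_le_sum (({l : L | p ∈ l} : Finset L) \ A) (fun l => secantCard S l) 2
    fun l hl => two_le_secantCard hS hp (by simpa using (mem_sdiff.1 hl).1)
  rw [card_pencil] at hcard
  rw [sum_pencil_secantCard_of_mem hp] at hsum
  rw [smul_eq_mul] at htwo
  omega

theorem secantCard_add_order_le {S : Finset P} (hS : ∀ l : L, secantCard S l ≠ 1) {p : P}
    (hp : p ∈ S) {l : L} (hl : p ∈ l) : secantCard S l + order P L ≤ #S := by
  have := sum_secantCard_add_le hS hp (A := {l}) (by simpa)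
  rw [sum_singleton, card_singleton] at this
  omega

theorem secantCard_add_secantCard_add_order_le {S : Finset P} (hS : ∀ l : L, secantCard S l ≠ 1)
    {p : P} (hp : p ∈ S) {l m : L} (hlm : l ≠ m) (hl : p ∈ l) (hm : p ∈ m) :
    secantCard S l + secantCard S m + order P L ≤ #S + 2 := by
  classical
  have := sum_secantCard_add_le hS hp (A := {l, m}) (by simp [hl, hm])
  rw [sum_pair hlm, card_pair hlm] at this
  omega

theorem mem_of_order_le_secantCard {S : Finset P} {l : L}
    (hl : order P L ≤ secantCard S l) {p r : P} (hr : r ∈ l) (hrS : r ∉ S) (hp : p ∈ l)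
    (hpr : p ≠ r) : p ∈ S := by
  classical
  have := Fintype.ofFinite P
  by_contra hpS
  have hsub : {q ∈ S | q ∈ l} ⊆ (({q : P | q ∈ l} : Finset P).erase r).erase p := fun q hq => by
    have hqS := (mem_filter.1 hq).1
    simpa [ne_of_mem_of_not_mem hqS hpS, ne_of_mem_of_not_mem hqS hrS] using (mem_filter.1 hq).2
  have hcard := card_le_card hsub
  rw [card_erase_of_mem (by simp [hp, hpr]), card_erase_of_mem (by simp [hr]), card_line] at hcard
  have := one_lt_order P L
  rw [secantCard] at hl
  omega

theorem mem_iff_of_order_le_secantCard {S : Finset P}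
    (hS : #S = 2 * order P L) {l m : L} (hlm : l ≠ m) {r : P} (hrS : r ∉ S) (hrl : r ∈ l)
    (hrm : r ∈ m) (hl : order P L ≤ secantCard S l) (hm : order P L ≤ secantCard S m) (p : P) :
    p ∈ S ↔ (p ∈ l ∨ p ∈ m) ∧ ¬(p ∈ l ∧ p ∈ m) := by
  classical
  have hinter : ∀ q, q ∈ l → q ∈ m → q = r := fun q hql hqm =>
    (Nondegenerate.eq_or_eq hql hrl hqm hrm).resolve_right hlm
  constructor
  · intro hp
    have hdisj : Disjoint {q ∈ S | q ∈ l} {q ∈ S | q ∈ m} :=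
      disjoint_filter.2 fun q hq hql hqm => hrS (hinter q hql hqm ▸ hq)
    have hunion : {q ∈ S | q ∈ l} ∪ {q ∈ S | q ∈ m} = S := by
      refine eq_of_subset_of_card_le (by grind) ?_
      rw [card_union_of_disjoint hdisj, hS, two_mul]
      exact add_le_add hl hm
    rw [← hunion, ← filter_or] at hp
    exact ⟨(mem_filter.1 hp).2, fun h => hrS (hinter p h.1 h.2 ▸ (mem_filter.1 hp).1)⟩
  · rintro ⟨hp | hp, hn⟩
    · exact mem_of_order_le_secantCard hl hrl hrS hp fun h => hn ⟨hp, h ▸ hrm⟩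
    · exact mem_of_order_le_secantCard hm hrm hrS hp fun h => hn ⟨h ▸ hrl, hp⟩

-- The lines through `t` other than `m` meet `l` in points of `S`, so they carry at most two points
-- of `S` each.
theorem order_le_secantCard_of_mem_of_mem {S : Finset P} (hS : ∀ l : L, secantCard S l ≠ 1)
    (hcard : #S = 2 * order P L) {l m : L} (hl : order P L ≤ secantCard S l) {r t : P}
    (hrl : r ∈ l) (hrS : r ∉ S) (htl : t ∉ l) (htS : t ∈ S) (hrm : r ∈ m) (htm : t ∈ m) :
    order P L ≤ secantCard S m := by
  classical
  have := Fintype.ofFinite L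
  have hle : ∀ k ∈ ({k : L | t ∈ k} : Finset L).erase m, secantCard S k ≤ 2 := by
    intro k hk
    obtain ⟨hkm, htk⟩ : k ≠ m ∧ t ∈ k := by simpa using hk
    have hlk : l ≠ k := by rintro rfl; exact htl htk
    obtain ⟨x, ⟨hxl, hxk⟩, -⟩ := HasPoints.existsUnique_point P L l k hlk
    have hxr : x ≠ r := by
      rintro rfl
      exact hkm ((Nondegenerate.eq_or_eq hxk htk hrm htm).resolve_left fun h => htl (h ▸ hxl))
    have := secantCard_add_secantCard_add_order_le hS
      (mem_of_order_le_secantCard hl hrl hrS hxl hxr) hlk hxl hxk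
    omega
  have hsum := add_sum_erase ({k : L | t ∈ k} : Finset L) (fun k => secantCard S k)
    (show m ∈ ({k : L | t ∈ k} : Finset L) by simpa using htm)
  have hrest := sum_le_card_nsmul _ (fun k => secantCard S k) _ hle
  rw [card_erase_of_mem (by simpa using htm), card_pencil, Nat.add_sub_cancel,
    smul_eq_mul] at hrest
  rw [sum_pencil_secantCard_of_mem htS] at hsum
  omega

theorem exists_mem_iff_of_order_le_secantCard {S : Finset P} (hS : ∀ l : L, secantCard S l ≠ 1)
    (hcard : #S = 2 * order P L) {l : L} (hl : order P L ≤ secantCard S l) :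
    ∃ m : L, ∀ p, p ∈ S ↔ (p ∈ l ∨ p ∈ m) ∧ ¬(p ∈ l ∧ p ∈ m) := by
  classical
  have := Fintype.ofFinite P
  have hq := one_lt_order P L
  have hl' : secantCard S l ≤ order P L := by
    obtain ⟨p, hp⟩ := card_pos.1 (show 0 < secantCard S l by omega)
    have := secantCard_add_order_le hS (mem_filter.1 hp).1 (mem_filter.1 hp).2
    omega
  rw [secantCard] at hl'
  obtain ⟨r, hrl, hr⟩ := exists_mem_notMem_of_card_lt_card
    (s := {p ∈ S | p ∈ l}) (t := {p : P | p ∈ l}) (by rw [card_line]; omega)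
  obtain ⟨t, htS, ht⟩ := exists_mem_notMem_of_card_lt_card
    (s := {p ∈ S | p ∈ l}) (t := S) (by omega)
  replace hrl : r ∈ l := by simpa using hrl
  have hrS : r ∉ S := fun h => hr (mem_filter.2 ⟨h, hrl⟩)
  have htl : t ∉ l := fun h => ht (mem_filter.2 ⟨htS, h⟩)
  obtain ⟨m, ⟨htm, hrm⟩, -⟩ :=
    HasLines.existsUnique_line P L t r (ne_of_mem_of_not_mem htS hrS)
  have hlm : l ≠ m := by rintro rfl; exact htl htm
  exact ⟨m, mem_iff_of_order_le_secantCard hcard hlm hrS hrl hrm hl <|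
    order_le_secantCard_of_mem_of_mem hS hcard hl hrl hrS htl htS hrm htm⟩

theorem exists_secantCard_eq_zero {S : Finset P} (hS : ∀ l : L, secantCard S l ≠ 1)
    (hcard : #S < 2 * (order P L + 1)) {p : P} (hp : p ∉ S) :
    ∃ l : L, p ∈ l ∧ secantCard S l = 0 := by
  by_contra! hne
  have := Fintype.ofFinite L
  have h := card_nsmul_le_sum {l : L | p ∈ l} (secantCard S) 2 fun l hl => by
    have := hS l
    have := hne l (by simpa using hl)
    omega
  rw [card_pencil, sum_pencil_secantCard_of_notMem hp, smul_eq_mul] at h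
  omega

theorem mem_iff_forall_secantCard_eq_zero_notMem {S : Finset P}
    (hS : ∀ l : L, secantCard S l ≠ 1) (hcard : #S < 2 * (order P L + 1)) {p : P} :
    p ∈ S ↔ ∀ l : L, secantCard S l = 0 → p ∉ l := by
  refine ⟨fun hp l hl hpl => ?_, fun h => by_contra fun hp => ?_⟩
  · have := two_le_secantCard hS hp hpl
    omega
  · obtain ⟨l, hpl, hl⟩ := exists_secantCard_eq_zero hS hcard hp
    exact h l hl hpl

theorem not_concurrent_of_secantCard_eq_zero {S : Finset P} {k : ℕ}
    (hk : ∀ l : L, secantCard S l ≤ k) (hcard : k * order P L < #S + 2 * k) {l m n : L}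
    (hlm : l ≠ m) (hln : l ≠ n) (hmn : m ≠ n)
    (hl : secantCard S l = 0) (hm : secantCard S m = 0) (hn : secantCard S n = 0) {p : P}
    (hpl : p ∈ l) (hpm : p ∈ m) : p ∉ n := by
  classical
  have := Fintype.ofFinite L
  intro hpn
  have hp : p ∉ S := fun hp => notMem_empty p (card_eq_zero.1 hl ▸ mem_filter.2 ⟨hp, hpl⟩)
  have hthree : #{l, m, n} ≤ #{l : L | p ∈ l ∧ secantCard S l = 0} :=
    card_le_card fun x hx => by
      obtain rfl | rfl | rfl : x = l ∨ x = m ∨ x = n := by simpa using hx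
      all_goals simp [*]
  rw [card_eq_three.2 ⟨l, m, n, hlm, hln, hmn, rfl⟩] at hthree
  have := card_add_mul_card_external_le hk hp
  have := Nat.mul_le_mul_left k hthree
  linarith

-- A point of `S` lies on at most one 4-secant, so there are at most two of these, while the sum of
-- `n * (n - 2)` over all lines shows that their number is a multiple of three.
theorem secantCard_ne_four {S : Finset P} (hS : ∀ l : L, secantCard S l ≠ 1) (hcard : #S = 10)
    (horder : order P L = 5) (hle : ∀ l : L, secantCard S l ≤ 4) (l : L) :
    secantCard S l ≠ 4 := by
  have := Fintype.ofFinite L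
  let t (n : ℕ) (l : L) : ℕ := if secantCard S l = n then 1 else 0
  have hpencil : ∀ p ∈ S, ∑ l : L with p ∈ l, t 4 l ≤ 1 := fun p hp => by
    have hsum : ∑ l : L with p ∈ l, (2 + 2 * t 4 l) ≤ ∑ l : L with p ∈ l, secantCard S l :=
      sum_le_sum fun l hl => by
        have := two_le_secantCard hS hp (l := l) (by simpa using hl)
        grind
    rw [sum_pencil_secantCard_of_mem hp, sum_add_distrib, sum_const, card_pencil, ← mul_sum,
      smul_eq_mul] at hsum
    omega
  have hfour : ∑ l : L, 4 * t 4 l ≤ 10 := calc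
    ∑ l : L, 4 * t 4 l = ∑ l : L, secantCard S l * t 4 l := sum_congr rfl fun l _ => by grind
    _ = ∑ p ∈ S, ∑ l : L with p ∈ l, t 4 l := sum_secantCard_mul S _
    _ ≤ 10 := (sum_le_card_nsmul _ _ _ hpencil).trans_eq (by rw [hcard]; rfl)
  have hsq : ∑ l : L, secantCard S l ^ 2 =
      ∑ l : L, (2 * secantCard S l + 3 * t 3 l + 8 * t 4 l) := sum_congr rfl fun l _ => by
    have := hS l
    have := hle l
    interval_cases h : secantCard S l <;> simp_all [t]
  rw [sum_secantCard_sq, sum_add_distrib, sum_add_distrib, ← mul_sum, ← mul_sum, ← mul_sum,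
    sum_secantCard, hcard, horder] at hsq
  rw [← mul_sum] at hfour
  have hzero : ∑ l : L, t 4 l = 0 := by omega
  simpa [t] using sum_eq_zero_iff.1 hzero l (mem_univ l)

end SecantCounting

section Arcs

variable {V ι : Type*} [AddCommGroup V] [Module F V]

variable (F) in
/-- The family `v` represents an arc of the projective plane of a three-dimensional space `V`: no
three of the points spanned by its members are collinear. -/
def IsArc (v : ι → V) : Prop :=
  ∀ ⦃i j k : ι⦄, i ≠ j → i ≠ k → j ≠ k → LinearIndependent F ![v i, v j, v k]

/-- The line `f = 0` meets the point family `v` in the point `v i` only. -/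
def IsTangentAt (v : ι → V) (i : ι) (f : Dual F V) : Prop :=
  ∀ j, f (v j) = 0 ↔ j = i

theorem prod_erase_zero_eq_neg_one [Fintype F] [DecidableEq F] :
    ∏ x ∈ univ.erase (0 : F), x = -1 := by
  have h := congrArg Units.val (FiniteField.prod_univ_units_id_eq_neg_one (K := F))
  rw [Units.coe_prod] at h
  rw [prod_subtype (p := (· ≠ 0)) _ (by simp), ← unitsEquivNeZero.prod_comp]
  simpa using h

theorem three_le_card_of_eq_card_add_one [Fintype F] [Fintype ι]
    (hι : Fintype.card ι = Fintype.card F + 1) : 3 ≤ ENat.card ι := by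
  rw [ENat.card_eq_coe_fintype_card, hι]
  exact_mod_cast Nat.succ_le_succ (Fintype.one_lt_card (α := F))

theorem exists_dual_ne_zero_of_two_lt_finrank (hV : 2 < finrank F V) (u w : V) :
    ∃ f : Dual F V, f ≠ 0 ∧ f u = 0 ∧ f w = 0 := by
  classical
  have hlt : Submodule.span F {u, w} < ⊤ := by
    refine Submodule.lt_top_of_finrank_lt_finrank (lt_of_le_of_lt ?_ hV)
    have := (finrank_span_finset_le_card (R := F) {u, w}).trans card_le_two
    rwa [Set.finrank, coe_pair] at this
  obtain ⟨f, hf, hle⟩ := Submodule.exists_le_ker_of_lt_top _ hlt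
  exact ⟨f, hf, hle (Submodule.subset_span (by simp)), hle (Submodule.subset_span (by simp))⟩

namespace IsArc

variable {v : ι → V}

theorem linearIndependent_pair (hv : IsArc F v) (hι : 3 ≤ ENat.card ι) {i j : ι} (hij : i ≠ j) :
    LinearIndependent F ![v i, v j] := by
  obtain ⟨k, hki, hkj⟩ := ENat.exists_ne_ne_of_three_le hι i j
  convert (hv hij hki.symm hkj.symm).comp ![0, 1] (by decide) using 1
  ext l
  fin_cases l <;> rfl

theorem ne_zero (hv : IsArc F v) (hι : 3 ≤ ENat.card ι) (i : ι) : v i ≠ 0 := by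
  obtain ⟨k, hki, -⟩ := ENat.exists_ne_ne_of_three_le hι i i
  exact (hv.linearIndependent_pair hι hki.symm).ne_zero 0

theorem dual_eq_zero (hv : IsArc F v) (hV : finrank F V = 3) {f : Dual F V} {i j k : ι}
    (hij : i ≠ j) (hik : i ≠ k) (hjk : j ≠ k) (hi : f (v i) = 0) (hj : f (v j) = 0)
    (hk : f (v k) = 0) : f = 0 := by
  refine LinearMap.ext_on_range
    ((hv hij hik hjk).span_eq_top_of_card_eq_finrank (by simp [hV])) fun l => ?_
  fin_cases l <;> simpa

theorem exists_secant (hv : IsArc F v) (hV : finrank F V = 3) {i j : ι} (hij : i ≠ j) :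
    ∃ h : Dual F V, ∀ k, h (v k) = 0 ↔ k = i ∨ k = j := by
  obtain ⟨h, hne, hi, hj⟩ := exists_dual_ne_zero_of_two_lt_finrank (F := F) (by omega) (v i) (v j)
  refine ⟨h, fun k => ⟨fun hk => ?_, by rintro (rfl | rfl) <;> assumption⟩⟩
  by_contra! hk'
  exact hne (hv.dual_eq_zero hV hij hk'.1.symm hk'.2.symm hi hj hk)

theorem injOn_div (hv : IsArc F v) (hV : finrank F V = 3) {f h : Dual F V} {i : ι}
    (hf : f (v i) = 0) (hh : h (v i) = 0) (hfh : ∀ c : F, f ≠ c • h) :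
    Set.InjOn (fun j => f (v j) / h (v j)) {j | h (v j) ≠ 0} := by
  intro j hj k hk heq
  by_contra hjk
  have hij : i ≠ j := by rintro rfl; exact hj hh
  have hik : i ≠ k := by rintro rfl; exact hk hh
  refine hfh (f (v j) / h (v j)) (sub_eq_zero.1 (hv.dual_eq_zero hV hij hik hjk ?_ ?_ ?_))
  · simp [hf, hh]
  · simp [div_mul_cancel₀ _ hj]
  · simp only [heq, LinearMap.sub_apply, LinearMap.smul_apply, smul_eq_mul, div_mul_cancel₀ _ hk,
      sub_self]

variable [Fintype F] [Fintype ι]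

theorem exists_isTangentAt (hv : IsArc F v) (hV : finrank F V = 3)
    (hι : Fintype.card ι = Fintype.card F + 1) (i : ι) : ∃ f : Dual F V, IsTangentAt v i f := by
  classical
  have hF := Fintype.one_lt_card (α := F)
  obtain ⟨j, hji⟩ := Fintype.exists_ne_of_one_lt_card (by omega) i
  obtain ⟨k, hki, hkj⟩ :=
    ENat.exists_ne_ne_of_three_le (three_le_card_of_eq_card_add_one hι) i j
  obtain ⟨g, hg⟩ := hv.exists_secant hV hki.symm
  obtain ⟨h, hh⟩ := hv.exists_secant hV hji.symm
  obtain ⟨c, -, hc⟩ := exists_mem_notMem_of_card_lt_card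
    (s := ((univ.erase i).erase j).image fun l => g (v l) / h (v l)) (t := univ)
    (card_image_le.trans_lt (by simp [card_erase_of_mem, hji, hι]; omega))
  refine ⟨g - c • h, fun l => ?_⟩
  have hgi : g (v i) = 0 := (hg i).2 (.inl rfl)
  have hhi : h (v i) = 0 := (hh i).2 (.inl rfl)
  have hhj : h (v j) = 0 := (hh j).2 (.inr rfl)
  have hgj : g (v j) ≠ 0 := fun h0 => ((hg j).1 h0).elim hji hkj.symm
  constructor
  · intro hl
    by_contra hli
    rw [LinearMap.sub_apply, LinearMap.smul_apply, smul_eq_mul, sub_eq_zero] at hl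
    obtain rfl | hlj := eq_or_ne l j
    · exact hgj (by rw [hl, hhj, mul_zero])
    · have hhl : h (v l) ≠ 0 := fun h0 => ((hh l).1 h0).elim hli hlj
      exact hc (mem_image.2 ⟨l, by simp [hli, hlj], by rw [hl, mul_div_cancel_right₀ _ hhl]⟩)
  · rintro rfl
    simp [hgi, hhi]

theorem exists_eq_smul_of_isTangentAt (hv : IsArc F v) (hV : finrank F V = 3)
    (hι : Fintype.card ι = Fintype.card F + 1) {i : ι} {f h : Dual F V} (hf : IsTangentAt v i f)
    (hh : IsTangentAt v i h) : ∃ c : F, f = c • h := by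
  classical
  by_contra! hfh
  have hmaps : Set.MapsTo (fun j => f (v j) / h (v j)) (univ.erase i) (univ.erase (0 : F)) := by
    intro j hj
    have hji : j ≠ i := by simpa using hj
    simpa using div_ne_zero (mt (hf j).1 hji) (mt (hh j).1 hji)
  have hinj := (hv.injOn_div hV ((hf i).2 rfl) ((hh i).2 rfl) hfh).mono
    (s₁ := ↑(univ.erase i)) fun j hj => mt (hh j).1 (by simpa using hj)
  have := card_le_card_of_injOn _ hmaps hinj
  simp only [card_erase_of_mem (mem_univ _), card_univ] at this
  have := Fintype.card_pos (α := F)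
  omega

-- By `injOn_div` the quotients `f (v k) / h (v k)` run through the nonzero elements of `F`.
theorem prod_tangent_eq_neg_prod_secant [DecidableEq ι] (hv : IsArc F v) (hV : finrank F V = 3)
    (hι : Fintype.card ι = Fintype.card F + 1) {i j : ι} (hij : i ≠ j) {f h : Dual F V}
    (hf : IsTangentAt v i f) (hh : ∀ k, h (v k) = 0 ↔ k = i ∨ k = j) :
    ∏ k ∈ (univ.erase i).erase j, f (v k) = -∏ k ∈ (univ.erase i).erase j, h (v k) := by
  classical
  have hf0 : ∀ k ∈ (univ.erase i).erase j, f (v k) ≠ 0 := fun k hk =>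
    mt (hf k).1 (ne_of_mem_erase (mem_of_mem_erase hk))
  have hh0 : ∀ k ∈ (univ.erase i).erase j, h (v k) ≠ 0 := fun k hk =>
    mt (hh k).1 (by simpa [and_comm] using hk)
  have hfh : ∀ c : F, f ≠ c • h := by
    rintro c rfl
    exact hij ((hf j).1 (by simp [(hh j).2 (.inr rfl)])).symm
  have hinj := (hv.injOn_div hV ((hf i).2 rfl) ((hh i).2 (.inl rfl)) hfh).mono
    (s₁ := ↑((univ.erase i).erase j)) fun k hk => hh0 k (mem_coe.1 hk)
  have himage : ((univ.erase i).erase j).image (fun k => f (v k) / h (v k)) = univ.erase 0 := by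
    refine eq_of_subset_of_card_le (image_subset_iff.2 fun k hk => ?_) ?_
    · simpa using div_ne_zero (hf0 k hk) (hh0 k hk)
    · rw [card_image_of_injOn hinj]
      simp [card_erase_of_mem, hij.symm, hι]
  have hdiv : ∏ k ∈ (univ.erase i).erase j, f (v k) / h (v k) = -1 := by
    rw [← prod_erase_zero_eq_neg_one, ← himage, prod_image hinj]
  rw [prod_div_distrib, div_eq_iff (prod_ne_zero_iff.2 hh0)] at hdiv
  rw [hdiv, neg_one_mul]

theorem prod_tangent_mul_comm [DecidableEq ι] (hv : IsArc F v) (hV : finrank F V = 3)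
    (hι : Fintype.card ι = Fintype.card F + 1) {i j : ι} {f g : Dual F V}
    (hf : IsTangentAt v i f) (hg : IsTangentAt v j g) :
    (∏ k ∈ univ.erase i, f (v k)) * g (v i) = (∏ k ∈ univ.erase j, g (v k)) * f (v j) := by
  obtain rfl | hij := eq_or_ne i j
  · simp [(hf i).2 rfl, (hg i).2 rfl]
  obtain ⟨h, hh⟩ := hv.exists_secant hV hij
  rw [← mul_prod_erase _ _ (show j ∈ univ.erase i by simp [hij.symm]),
    ← mul_prod_erase _ _ (show i ∈ univ.erase j by simp [hij]),
    hv.prod_tangent_eq_neg_prod_secant hV hι hij hf hh,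
    hv.prod_tangent_eq_neg_prod_secant hV hι hij.symm hg fun k => (hh k).trans or_comm,
    erase_right_comm]
  ring

theorem exists_symmetric_tangents (hv : IsArc F v) (hV : finrank F V = 3)
    (hι : Fintype.card ι = Fintype.card F + 1) :
    ∃ f : ι → Dual F V, (∀ i, IsTangentAt v i (f i)) ∧ ∀ i j, f i (v j) = f j (v i) := by
  classical
  choose f hf using hv.exists_isTangentAt hV hι
  have hprod : ∀ i, ∏ k ∈ univ.erase i, f i (v k) ≠ 0 := fun i =>
    prod_ne_zero_iff.2 fun k hk => mt (hf i k).1 (ne_of_mem_erase hk)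
  refine ⟨fun i => (∏ k ∈ univ.erase i, f i (v k))⁻¹ • f i, fun i j => ?_, fun i j => ?_⟩
  · rw [LinearMap.smul_apply, smul_eq_zero_iff_right (inv_ne_zero (hprod i)), hf i j]
  · rw [LinearMap.smul_apply, LinearMap.smul_apply, smul_eq_mul, smul_eq_mul,
      inv_mul_eq_iff_eq_mul₀ (hprod i), mul_left_comm, eq_inv_mul_iff_mul_eq₀ (hprod j)]
    exact (hv.prod_tangent_mul_comm hV hι (hf i) (hf j)).symm

end IsArc

theorem exists_isSymm_bilinForm_of_span_eq_top {v : ι → V}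
    (hv : Submodule.span F (Set.range v) = ⊤) {f : ι → Dual F V}
    (hf : ∀ i j, f i (v j) = f j (v i)) :
    ∃ B : LinearMap.BilinForm F V, B.IsSymm ∧ ∀ i, B (v i) = f i := by
  obtain ⟨κ, a, -, hspan, hind⟩ := exists_linearIndependent' F v
  let b := Basis.mk hind (by rw [hspan, hv])
  have hb : ∀ k, b k = v (a k) := Basis.mk_apply hind _
  let B : LinearMap.BilinForm F V := b.constr F fun k => f (a k)
  have hB : ∀ k, B (b k) = f (a k) := b.constr_basis F _
  have hflip : ∀ i, LinearMap.flip B (v i) = f i := fun i =>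
    b.ext fun k => by rw [LinearMap.flip_apply, hB, hf, hb]
  have hsymm : LinearMap.flip B = B := b.ext fun k => by rw [hB, hb, hflip]
  exact ⟨B, ⟨LinearMap.congr_fun₂ hsymm.symm⟩, fun i => by rw [← hsymm, hflip]⟩

theorem nondegenerate_of_hollow_basis (h2 : (2 : F) ≠ 0) {B : LinearMap.BilinForm F V}
    (hB : B.IsSymm) (b : Basis (Fin 3) F V) (hb : ∀ i j, B (b i) (b j) = 0 ↔ j = i) :
    B.Nondegenerate := by
  refine LinearMap.BilinForm.nondegenerate_of_det_ne_zero B b ?_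
  have hdet : (LinearMap.BilinForm.toMatrix b B).det =
      2 * (B (b 0) (b 1) * B (b 0) (b 2) * B (b 1) (b 2)) := by
    simp only [Matrix.det_fin_three, LinearMap.BilinForm.toMatrix_apply, (hb _ _).2 rfl,
      hB.eq (b 1) (b 0), hB.eq (b 2) (b 0), hB.eq (b 2) (b 1)]
    ring
  rw [hdet]
  simp [h2, hb]

theorem two_mul_finrank_le_of_le_orthogonal [FiniteDimensional F V] {B : LinearMap.BilinForm F V}
    (hB : B.Nondegenerate) {W : Submodule F V} (hW : W ≤ B.orthogonal W) :
    2 * finrank F W ≤ finrank F V := by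
  have := Submodule.finrank_mono hW
  have := W.finrank_le
  rw [B.finrank_orthogonal hB] at *
  omega

theorem mem_span_singleton_of_isotropic [FiniteDimensional F V] (hV : finrank F V ≤ 3)
    {B : LinearMap.BilinForm F V} (hB : B.Nondegenerate) (hsymm : B.IsSymm) {u w : V}
    (hu : u ≠ 0) (huu : B u u = 0) (huw : B u w = 0) (hww : B w w = 0) :
    w ∈ Submodule.span F {u} := by
  have hle : Submodule.span F {u, w} ≤ B.orthogonal (Submodule.span F {u, w}) := by
    intro x hx y hy
    obtain ⟨a, b, rfl⟩ := Submodule.mem_span_pair.1 hx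
    obtain ⟨c, d, rfl⟩ := Submodule.mem_span_pair.1 hy
    simp [huu, huw, hww, hsymm.eq w u]
  have hrank := two_mul_finrank_le_of_le_orthogonal hB hle
  by_contra hw
  have hind : LinearIndependent F ![u, w] := by
    rw [LinearIndependent.pair_iff' hu]
    exact fun a ha => hw (Submodule.mem_span_singleton.2 ⟨a, ha⟩)
  have := finrank_span_eq_card hind
  rw [Matrix.range_cons_cons_empty, Fintype.card_fin] at this
  omega

theorem mem_span_pair_of_dual_eq_zero (hV : finrank F V = 3) {u w x : V}
    (hind : LinearIndependent F ![u, w]) {f : Dual F V} (hf : f ≠ 0) (hu : f u = 0) (hw : f w = 0)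
    (hx : f x = 0) : x ∈ Submodule.span F {u, w} := by
  have : FiniteDimensional F V := .of_finrank_pos (by omega)
  have hrank := finrank_span_eq_card hind
  rw [Matrix.range_cons_cons_empty, Fintype.card_fin] at hrank
  have hker := Dual.finrank_ker_add_one_of_ne_zero hf
  have hle : Submodule.span F {u, w} ≤ LinearMap.ker f := by
    simp [Submodule.span_le, Set.pair_subset_iff, hu, hw]
  rw [Submodule.eq_of_le_of_finrank_eq hle (by omega)]
  exact hx

theorem IsArc.exists_mem_span_singleton_of_isotropic [Fintype F] [Fintype ι] {v : ι → V}
    (hv : IsArc F v) (hV : finrank F V = 3) (hι : Fintype.card ι = Fintype.card F + 1)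
    (h2 : (2 : F) ≠ 0) {B : LinearMap.BilinForm F V} (hB : B.Nondegenerate) (hsymm : B.IsSymm)
    (htan : ∀ i, IsTangentAt v i (B (v i))) {w : V} (hw : B w w = 0) :
    ∃ i, w ∈ Submodule.span F {v i} := by
  have : FiniteDimensional F V := .of_finrank_pos (by omega)
  have hι3 := three_le_card_of_eq_card_add_one hι
  by_contra! hwv
  obtain ⟨i⟩ : Nonempty ι := Fintype.card_pos_iff.1 (by omega)
  have hvv : ∀ j, B (v j) (v j) = 0 := fun j => (htan j j).2 rfl
  have hBw : B (v i) w ≠ 0 := fun h0 => hwv i <|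
    mem_span_singleton_of_isotropic hV.le hB hsymm (hv.ne_zero hι3 i) (hvv i) h0 hw
  obtain ⟨h, hne, hi, hhw⟩ := exists_dual_ne_zero_of_two_lt_finrank (F := F) (by omega) (v i) w
  obtain ⟨j, hji, hj⟩ : ∃ j ≠ i, h (v j) = 0 := by
    by_contra! hnot
    obtain ⟨c, hc⟩ := hv.exists_eq_smul_of_isTangentAt hV hι (htan i) (h := h)
      fun j => ⟨fun hj => by_contra fun hji => hnot j hji hj, by rintro rfl; exact hi⟩
    exact hBw (by simp [hc, hhw])
  obtain ⟨a, b, rfl⟩ := Submodule.mem_span_pair.1 <|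
    mem_span_pair_of_dual_eq_zero hV (hv.linearIndependent_pair hι3 hji.symm) hne hi hj hhw
  have hab : 2 * (a * b) * B (v i) (v j) = 0 := by
    rw [← hw]
    simp only [map_add, map_smul, LinearMap.add_apply, LinearMap.smul_apply, hvv, smul_eq_mul,
      hsymm.eq (v j) (v i)]
    ring
  obtain rfl | rfl : a = 0 ∨ b = 0 := by simpa [h2, mt (htan i j).1 hji] using hab
  · exact hwv j (Submodule.mem_span_singleton.2 ⟨b, by simp⟩)
  · exact hwv i (Submodule.mem_span_singleton.2 ⟨a, by simp⟩)

/-- Segre's theorem, with the conic given by a symmetric bilinear form. -/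
theorem IsArc.exists_bilinForm [Fintype F] [Fintype ι] {v : ι → V} (hv : IsArc F v)
    (hV : finrank F V = 3) (hι : Fintype.card ι = Fintype.card F + 1) (h2 : (2 : F) ≠ 0) :
    ∃ B : LinearMap.BilinForm F V, B.IsSymm ∧ B.Nondegenerate ∧
      ∀ w, B w w = 0 ↔ ∃ i, w ∈ Submodule.span F {v i} := by
  have hF := Fintype.one_lt_card (α := F)
  obtain ⟨f, hf, hff⟩ := hv.exists_symmetric_tangents hV hι
  obtain ⟨i, j, k, hij, hik, hjk⟩ := Fintype.two_lt_card_iff.1 (show 2 < Fintype.card ι by omega)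
  let b := basisOfLinearIndependentOfCardEqFinrank (hv hij hik hjk) (by simp [hV])
  have hspan : Submodule.span F (Set.range v) = ⊤ := by
    rw [eq_top_iff, ← b.span_eq]
    refine Submodule.span_mono ?_
    rintro _ ⟨l, rfl⟩
    fin_cases l <;> simp [b]
  obtain ⟨B, hsymm, hB⟩ := exists_isSymm_bilinForm_of_span_eq_top hspan hff
  have hnondeg : B.Nondegenerate := by
    refine nondegenerate_of_hollow_basis h2 hsymm b fun l m => ?_
    fin_cases l <;> fin_cases m <;>
      simp [b, hB, (hf _ _), hij, hij.symm, hik, hik.symm, hjk, hjk.symm]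
  refine ⟨B, hsymm, hnondeg, fun w => ⟨fun hw => ?_, ?_⟩⟩
  · exact hv.exists_mem_span_singleton_of_isotropic hV hι h2 hnondeg hsymm (fun i => hB i ▸ hf i) hw
  · rintro ⟨i, hi⟩
    obtain ⟨a, rfl⟩ := Submodule.mem_span_singleton.1 hi
    simp [hB, (hf i i).2 rfl]

end Arcs


section InteriorPoints

open QuadraticMap

theorem linearIndependent_dual_of_forall_eq_zero {V κ : Type*} [AddCommGroup V] [Module F V]
    [FiniteDimensional F V] [Fintype κ] (hκ : Fintype.card κ = finrank F V) {f : κ → Dual F V}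
    (hf : ∀ x, (∀ i, f i x = 0) → x = 0) : LinearIndependent F f := by
  have hbot : (Submodule.span F (Set.range f)).dualCoannihilator = ⊥ := by
    refine (Submodule.eq_bot_iff _).2 fun x hx => hf x fun i => ?_
    exact (Submodule.mem_dualCoannihilator x).1 hx _ (Submodule.subset_span ⟨i, rfl⟩)
  have := Subspace.finrank_add_finrank_dualCoannihilator_eq (Submodule.span F (Set.range f))
  rw [hbot, finrank_bot, add_zero] at this
  rw [linearIndependent_iff_card_eq_finrank_span, hκ, Set.finrank, this]

theorem exists_quadraticForm_of_bilinForm_dual {V : Type*} [AddCommGroup V] [Module F V]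
    [FiniteDimensional F V] {B : LinearMap.BilinForm F (Dual F V)} (hB : B.Nondegenerate)
    (hsymm : B.IsSymm) :
    ∃ (Q : QuadraticForm F V) (e : V ≃ₗ[F] Dual F V),
      (∀ v, Q v = B (e v) (e v)) ∧ ∀ v w, polar Q v w = 2 * e v w := by
  let e := (evalEquiv F V).trans (B.toDual hB).symm
  have he : ∀ v f, B (e v) f = f v := fun v f => by simp [e]
  refine ⟨LinearMap.BilinMap.toQuadraticMap (B.compl₁₂ e.toLinearMap e.toLinearMap), e,
    fun v => rfl, fun v w => ?_⟩
  rw [LinearMap.BilinMap.polar_toQuadraticMap, LinearMap.compl₁₂_apply, LinearMap.compl₁₂_apply,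
    LinearEquiv.coe_coe, hsymm.eq (e v), he, two_mul]

theorem mk_mem_pointsOn {L : Submodule F (Fin 3 → F)} {v : Fin 3 → F} (hv : v ≠ 0) :
    Projectivization.mk F v hv ∈ pointsOn L ↔ v ∈ L := by
  rw [pointsOn, Set.mem_ofPred_eq, Projectivization.submodule_mk,
    Submodule.span_singleton_le_iff_mem]

theorem mk_mem_conicSet {Q : QuadraticForm F (Fin 3 → F)} {v : Fin 3 → F} (hv : v ≠ 0) :
    Projectivization.mk F v hv ∈ conicSet Q ↔ Q v = 0 := by
  rw [conicSet, Set.mem_ofPred_eq, Projectivization.submodule_mk]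
  refine ⟨fun h => h v (Submodule.mem_span_singleton_self v), fun h w hw => ?_⟩
  obtain ⟨a, rfl⟩ := Submodule.mem_span_singleton.1 hw
  rw [QuadraticMap.map_smul, h, smul_zero]

theorem isProjLine_ker {f : Dual F (Fin 3 → F)} (hf : f ≠ 0) :
    IsProjLine F (LinearMap.ker f) := by
  have := Dual.finrank_ker_add_one_of_ne_zero hf
  rw [finrank_fin_fun] at this
  rw [IsProjLine]
  omega

theorem NondegQF.polarBilin_ne_zero {Q : QuadraticForm F (Fin 3 → F)} (hQ : NondegQF Q)
    {v : Fin 3 → F} (hv : v ≠ 0) : polarBilin Q v ≠ 0 := fun h =>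
  hv (hQ v fun w => by rw [← polarBilin_apply_apply, h, LinearMap.zero_apply])

theorem isSymm_polarBilin {V : Type*} [AddCommGroup V] [Module F V] (Q : QuadraticForm F V) :
    LinearMap.BilinForm.IsSymm (polarBilin Q) :=
  ⟨polar_comm Q⟩

theorem NondegQF.nondegenerate_polarBilin {Q : QuadraticForm F (Fin 3 → F)} (hQ : NondegQF Q) :
    LinearMap.BilinForm.Nondegenerate (polarBilin Q) :=
  LinearMap.BilinForm.Nondegenerate.ofSeparatingLeft hQ

theorem NondegQF.isTangentLine_ker {Q : QuadraticForm F (Fin 3 → F)} (hQ : NondegQF Q)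
    {v : Fin 3 → F} (hv : v ≠ 0) (h0 : Q v = 0) :
    IsTangentLine (conicSet Q) (LinearMap.ker (polarBilin Q v)) := by
  have hpolar : ∀ w, Q w = 0 → polarBilin Q w w = 0 := fun w hw => by simp [hw]
  refine ⟨isProjLine_ker (hQ.polarBilin_ne_zero hv), Projectivization.mk F v hv,
    ⟨(mk_mem_conicSet hv).2 h0, (mk_mem_pointsOn hv).2 (hpolar v h0)⟩, ?_⟩
  intro P hP
  induction P using Projectivization.ind with | h w hw => ?_
  rw [Set.mem_inter_iff, mk_mem_conicSet, mk_mem_pointsOn, LinearMap.mem_ker] at hP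
  rw [Projectivization.mk_eq_mk_iff', ← Submodule.mem_span_singleton]
  exact mem_span_singleton_of_isotropic (by simp) hQ.nondegenerate_polarBilin
    (isSymm_polarBilin Q) hv (hpolar v h0) hP.2 (hpolar w hP.1)

-- A second point of the conic on `L` is sought on the line joining `P` and `y`.
theorem exists_polar_eq_zero_of_isTangentLine {Q : QuadraticForm F (Fin 3 → F)}
    {L : Submodule F (Fin 3 → F)} (hL : IsTangentLine (conicSet Q) L) :
    ∃ v, v ≠ 0 ∧ Q v = 0 ∧ ∀ y ∈ L, polar Q v y = 0 := by
  obtain ⟨-, P, ⟨hPC, hPL⟩, hPu⟩ := hL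
  induction P using Projectivization.ind with | h v hv => ?_
  rw [mk_mem_conicSet] at hPC
  rw [mk_mem_pointsOn] at hPL
  refine ⟨v, hv, hPC, fun y hy => ?_⟩
  by_contra hvy
  have hvv : polar Q v v = 0 := by simp [hPC]
  set z : Fin 3 → F := polar Q v y • y + -Q y • v with hz
  have hvz : polar Q v z ≠ 0 := by
    simpa [hz, polar_add_right, polar_smul_right, hvv] using hvy
  have hz0 : z ≠ 0 := fun h0 => hvz (by simp [h0])
  have hQz : Q z = 0 := by
    rw [hz, QuadraticMap.map_add Q, QuadraticMap.map_smul, QuadraticMap.map_smul, hPC,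
      polar_smul_left, polar_smul_right, polar_comm Q y v]
    simp only [smul_eq_mul]
    ring
  have hmk := hPu (Projectivization.mk F z hz0) ⟨(mk_mem_conicSet hz0).2 hQz,
    (mk_mem_pointsOn hz0).2 (L.add_mem (L.smul_mem _ hy) (L.smul_mem _ hPL))⟩
  obtain ⟨a, ha⟩ := (Projectivization.mk_eq_mk_iff' F _ _ _ _).1 hmk
  exact hvz (by rw [← ha, polar_smul_right, hvv, smul_zero])

theorem NondegQF.isInteriorPoint_iff {Q : QuadraticForm F (Fin 3 → F)} (hQ : NondegQF Q)
    {x : Fin 3 → F} (hx : x ≠ 0) :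
    IsInteriorPoint (conicSet Q) (Projectivization.mk F x hx) ↔
      ∀ v, v ≠ 0 → Q v = 0 → polar Q v x ≠ 0 := by
  rw [IsInteriorPoint, IsExteriorPoint]
  constructor
  · rintro ⟨h1, h2⟩ v hv h0 hvx
    exact h2 ⟨h1, _, hQ.isTangentLine_ker hv h0, (mk_mem_pointsOn hx).2 hvx⟩
  · refine fun h => ⟨fun hC => ?_, ?_⟩
    · rw [mk_mem_conicSet] at hC
      exact h x hx hC (by simp [hC])
    · rintro ⟨-, L, hL, hxL⟩
      obtain ⟨v, hv, h0, hvL⟩ := exists_polar_eq_zero_of_isTangentLine hL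
      exact h v hv h0 (hvL x ((mk_mem_pointsOn hx).1 hxL))

/-- Segre's theorem in dual form: the lines `φ i = 0` are the tangents of the conic `Q = 0`. -/
theorem exists_isInteriorPoint_iff_of_isArc_dual [Fintype F] {ι : Type*} [Fintype ι]
    (h2 : (2 : F) ≠ 0) (hι : Fintype.card ι = Fintype.card F + 1)
    {φ : ι → Dual F (Fin 3 → F)} (hφ : IsArc F φ) :
    ∃ Q : QuadraticForm F (Fin 3 → F), NondegQF Q ∧ ∀ x (hx : x ≠ 0),
      IsInteriorPoint (conicSet Q) (Projectivization.mk F x hx) ↔ ∀ i, φ i x ≠ 0 := by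
  obtain ⟨B, hsymm, hB, hBφ⟩ := hφ.exists_bilinForm (by simp) hι h2
  obtain ⟨Q, e, hQe, hpolar⟩ := exists_quadraticForm_of_bilinForm_dual hB hsymm
  have hQ : NondegQF Q := fun v hv => e.map_eq_zero_iff.1 <| LinearMap.ext fun w => by
    simpa [hpolar, h2] using hv w
  refine ⟨Q, hQ, fun x hx => ?_⟩
  simp only [hQ.isInteriorPoint_iff hx, hQe, hBφ, hpolar, ne_eq, mul_eq_zero, h2, false_or]
  constructor
  · intro h i
    have hφi := hφ.ne_zero (three_le_card_of_eq_card_add_one hι) i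
    simpa using h (e.symm (φ i)) (by simpa using hφi) ⟨i, by simp⟩
  · rintro h v hv ⟨i, hi⟩ hvx
    obtain ⟨a, ha⟩ := Submodule.mem_span_singleton.1 hi
    have hva : a = 0 := by simpa [← ha, h i] using hvx
    exact hv (e.map_eq_zero_iff.1 (by rw [← ha, hva, zero_smul]))

end InteriorPoints

section ProjectiveLines

open Configuration Configuration.ProjectivePlane

/-- The line of `PG(2,F)` with homogeneous coordinates `l`; it links the subspaces `L` with
`IsProjLine F L` to the lines of the projective plane structure that Mathlib puts on `PGPoint F`,
in which lines are given by their coordinates. -/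
noncomputable def lineSubmodule (l : PGPoint F) : Submodule F (Fin 3 → F) :=
  LinearMap.ker (dotProductEquiv F (Fin 3) l.rep)

theorem isProjLine_lineSubmodule (l : PGPoint F) : IsProjLine F (lineSubmodule l) :=
  isProjLine_ker (by simpa using l.rep_nonzero)

theorem mem_pointsOn_lineSubmodule {p l : PGPoint F} : p ∈ pointsOn (lineSubmodule l) ↔ p ∈ l := by
  rw [ofField.mem_iff]
  induction p using Projectivization.ind with | h v hv => ?_
  rw [mk_mem_pointsOn, ← l.mk_rep, Projectivization.orthogonal_mk, l.mk_rep, dotProduct_comm,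
    lineSubmodule, LinearMap.mem_ker, dotProductEquiv_apply_apply]

theorem mk_mem_iff {v : Fin 3 → F} (hv : v ≠ 0) {l : PGPoint F} :
    Projectivization.mk F v hv ∈ l ↔ dotProductEquiv F (Fin 3) l.rep v = 0 := by
  rw [← mem_pointsOn_lineSubmodule, mk_mem_pointsOn, lineSubmodule, LinearMap.mem_ker]

theorem isArc_dotProductEquiv_rep {ι : Type*} {l : ι → PGPoint F}
    (hl : ∀ i j k, i ≠ j → i ≠ k → j ≠ k → ∀ p, p ∈ l i → p ∈ l j → p ∉ l k) :
    IsArc F fun i => dotProductEquiv F (Fin 3) (l i).rep := by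
  intro i j k hij hik hjk
  refine linearIndependent_dual_of_forall_eq_zero (by simp) fun x hx => ?_
  by_contra hx0
  exact hl i j k hij hik hjk (.mk F x hx0) ((mk_mem_iff hx0).2 (hx 0)) ((mk_mem_iff hx0).2 (hx 1))
    ((mk_mem_iff hx0).2 (hx 2))

theorem order_pgPoint [DecidableEq F] [Fintype F] :
    order (PGPoint F) (PGPoint F) = Fintype.card F := by
  have := Fintype.ofFinite (PGPoint F)
  have hcard := Projectivization.card_of_finrank F (Fin 3 → F) (finrank_fin_fun F)
  rw [Nat.card_eq_fintype_card, card_points (PGPoint F) (PGPoint F), Nat.card_eq_fintype_card,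
    sum_range_succ, sum_range_succ, sum_range_one] at hcard
  nlinarith

theorem NoTangents.secantCard_ne_one [∀ p l : PGPoint F, Decidable (p ∈ l)]
    {S : Finset (PGPoint F)} (hS : NoTangents (S : Set (PGPoint F))) (l : PGPoint F) :
    secantCard S l ≠ 1 := fun hl =>
  hS (lineSubmodule l) (isProjLine_lineSubmodule l) <| by
    simpa [mem_pointsOn_lineSubmodule] using card_eq_one_iff_existsUnique.1 hl

theorem isTrivialSWT_of_mem_iff {S : Set (PGPoint F)} (hS : S.Nonempty) {l m : PGPoint F}
    (h : ∀ p, p ∈ S ↔ (p ∈ l ∨ p ∈ m) ∧ ¬(p ∈ l ∧ p ∈ m)) : IsTrivialSWT S := by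
  simp only [← mem_pointsOn_lineSubmodule] at h
  obtain ⟨p, hp⟩ := hS
  refine ⟨lineSubmodule l, lineSubmodule m, isProjLine_lineSubmodule l, isProjLine_lineSubmodule m,
    fun heq => ?_, Set.ext h⟩
  have := (h p).1 hp
  grind

end ProjectiveLines

/-- a set without tangents of size 10 in `PG(2,5)` is either the
trivial one or the set of interior points of an irreducible conic. -/
theorem stmt_11 [Fintype F] (hcard : Fintype.card F = 5)
    (S : Set (PGPoint F)) (hS : NoTangents S) (hsize : S.ncard = 10) :
    IsTrivialSWT S ∨
      ∃ Q : QuadraticForm F (Fin 3 → F), NondegQF Q ∧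
        S = {P : PGPoint F | IsInteriorPoint (conicSet Q) P} := by
  classical
  have := Fintype.ofFinite (PGPoint F)
  lift S to Finset (PGPoint F) using S.toFinite
  rw [Set.ncard_coe_finset] at hsize
  have h2 : (2 : F) ≠ 0 := Ring.two_ne_zero (mt FiniteField.even_card_iff_char_two.1 (by omega))
  have horder := (order_pgPoint (F := F)).trans hcard
  have hS1 : ∀ l : PGPoint F, secantCard S l ≠ 1 := hS.secantCard_ne_one
  by_cases hfive : ∃ l : PGPoint F, 5 ≤ secantCard S l
  · obtain ⟨l, hl⟩ := hfive
    obtain ⟨m, hm⟩ := exists_mem_iff_of_order_le_secantCard hS1 (by omega) (horder.trans_le hl)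
    exact .inl (isTrivialSWT_of_mem_iff (card_pos.1 (by omega)) hm)
  have hle4 : ∀ l : PGPoint F, secantCard S l ≤ 4 := by grind
  have hle : ∀ l : PGPoint F, secantCard S l ≤ 3 := fun l =>
    Nat.le_of_lt_succ ((hle4 l).lt_of_ne (secantCard_ne_four hS1 hsize horder hle4 l))
  obtain ⟨Q, hQ, hinterior⟩ := exists_isInteriorPoint_iff_of_isArc_dual h2
    (ι := {l : PGPoint F // secantCard S l = 0})
    (by rw [Fintype.card_subtype, card_external_eq_six hS1 hsize horder hle, hcard])
    (isArc_dotProductEquiv_rep fun l m n hlm hln hmn _ =>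
      not_concurrent_of_secantCard_eq_zero hle (by omega) (Subtype.coe_ne_coe.2 hlm)
        (Subtype.coe_ne_coe.2 hln) (Subtype.coe_ne_coe.2 hmn) l.2 m.2 n.2)
  refine .inr ⟨Q, hQ, Set.ext fun p => ?_⟩
  induction p using Projectivization.ind with | h x hx => ?_
  rw [mem_coe, mem_iff_forall_secantCard_eq_zero_notMem hS1 (by omega), Set.mem_ofPred_eq,
    hinterior, Subtype.forall]
  simp only [mk_mem_iff, ne_eq]
end

section
/- Let q = p^h with p an odd prime and h ≥ 2, and let Tr : F_q → F_p denote the trace map. Let A be the set of points {⟨(1,x,Tr(x))⟩ : x ∈ F_q} of PG(2,q), and let N be the set of points on the line X = 0 that are not of the form ⟨(0,x,Tr(x))⟩ for any nonzero x ∈ F_q. Then A ∪ N is a set without tangents in PG(2,q) of size 2q − q/p. -/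
/-!
`PG(2,F)`: points are the 1-dimensional subspaces of `F^3` (modelled as the
projectivization of `Fin 3 → F`), lines are the 2-dimensional subspaces.
-/

variable {F : Type*} [Field F]

/-- The line of `PG(2,F)` with equation `X = 0`. -/
def lineX0 (F : Type*) [Field F] : Submodule F (Fin 3 → F) :=
  LinearMap.ker (LinearMap.proj 0 : (Fin 3 → F) →ₗ[F] F)

/-- The trace map `Tr : F_{p^h} → F_p`, `Tr(x) = x + x^p + ⋯ + x^{p^{h-1}}`
(viewed with values in `F`). -/
def trMap (F : Type*) [Field F] (p h : ℕ) : F → F :=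
  fun x => ∑ i ∈ Finset.range h, x ^ p ^ i

/-!
Let `F/K` be a finite field extension, `f : F → F` a `K`-linear map, and `A ∪ N` the set built from
`f` in place of the trace. A line other than `X = 0` meets `X = 0` in a single point `D`. If `D` is
not of the form `⟨(0, z, f z)⟩` with `z ≠ 0`, then `D` lies in `N`, and the equation of the line,
which is injective and hence surjective as a `K`-linear map on the vectors `(0, x, f x)`, has a
solution `(1, x, f x)`: the line contains a second point of the set. If `D = ⟨(0, z, f z)⟩`, then
`D ∉ N`, and with every `⟨(1, x, f x)⟩` the line also contains `⟨(1, x + z, f (x + z))⟩`. So only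
`X = 0` can be a tangent.

Suppose that `f` is a functional `φ : F → K`, such as the trace, and that `K ≠ F`. Then `φ` has a
nontrivial kernel, and `N` consists of the points `⟨(0, y, 1)⟩` with `φ y ≠ 1`. The kernel provides
two of them, and for finite `F` and `φ ≠ 0` their number is `q - q / |K|`.
-/

/-! ### Points and lines -/

lemma mem_pointsOn_iff_of_submodule_eq {P : PGPoint F} {v : Fin 3 → F}
    (hP : P.submodule = Submodule.span F {v}) {L : Submodule F (Fin 3 → F)} :
    P ∈ pointsOn L ↔ v ∈ L := by
  rw [pointsOn, Set.mem_ofPred_eq, hP, Submodule.span_singleton_le_iff_mem]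

/-- The affine point `⟨(1, x, t)⟩`, that is, a point off the line `X = 0`. -/
def affinePoint (x t : F) : PGPoint F :=
  Projectivization.mk F ![1, x, t] fun e => one_ne_zero (congrFun e 0)

/-- The point `⟨(0, y, 1)⟩` of the line `X = 0`; every point of this line is of this form,
except `⟨(0, 1, 0)⟩`. -/
def infinitePoint (y : F) : PGPoint F :=
  Projectivization.mk F ![0, y, 1] fun e => one_ne_zero (congrFun e 2)

lemma affinePoint_submodule (x t : F) :
    (affinePoint x t).submodule = Submodule.span F {![1, x, t]} :=
  Projectivization.submodule_mk _ _

lemma infinitePoint_submodule (y : F) :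
    (infinitePoint y).submodule = Submodule.span F {![0, y, 1]} :=
  Projectivization.submodule_mk _ _

lemma affinePoint_mem_pointsOn {x t : F} {L : Submodule F (Fin 3 → F)} :
    affinePoint x t ∈ pointsOn L ↔ ![1, x, t] ∈ L :=
  mem_pointsOn_iff_of_submodule_eq (affinePoint_submodule x t)

lemma affinePoint_notMem_lineX0 (x t : F) : affinePoint x t ∉ pointsOn (lineX0 F) := by
  simp [affinePoint_mem_pointsOn, lineX0]

lemma infinitePoint_mem_lineX0 (y : F) : infinitePoint y ∈ pointsOn (lineX0 F) := by
  simp [mem_pointsOn_iff_of_submodule_eq (infinitePoint_submodule y), lineX0]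

lemma affinePoint_inj {x t x' t' : F} :
    affinePoint x t = affinePoint x' t' ↔ x = x' ∧ t = t' := by
  refine ⟨fun e => ?_, by rintro ⟨rfl, rfl⟩; rfl⟩
  obtain ⟨c, hc⟩ := (Projectivization.mk_eq_mk_iff' F _ _ _ _).1 e
  obtain rfl : c = 1 := by simpa using congrFun hc 0
  exact ⟨by simpa using (congrFun hc 1).symm, by simpa using (congrFun hc 2).symm⟩

lemma infinitePoint_injective : Function.Injective (infinitePoint : F → PGPoint F) := by
  intro y y' e
  obtain ⟨c, hc⟩ := (Projectivization.mk_eq_mk_iff' F _ _ _ _).1 e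
  obtain rfl : c = 1 := by simpa using congrFun hc 2
  simpa using (congrFun hc 1).symm

lemma submodule_eq_or_eq_infinitePoint_of_mem_lineX0 {P : PGPoint F}
    (hP : P ∈ pointsOn (lineX0 F)) :
    P.submodule = Submodule.span F {![0, 1, 0]} ∨ ∃ y, P = infinitePoint y := by
  induction P using Projectivization.ind with
  | h v hv =>
  have hvL := (mem_pointsOn_iff_of_submodule_eq (Projectivization.submodule_mk v hv)).1 hP
  have h0 : v 0 = 0 := by simpa [lineX0] using hvL
  by_cases h2 : v 2 = 0
  · left
    have h01 : (![0, 1, 0] : Fin 3 → F) ≠ 0 := fun e => one_ne_zero (congrFun e 1)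
    rw [← Projectivization.submodule_mk _ h01]
    congr 1
    rw [Projectivization.mk_eq_mk_iff']
    refine ⟨v 1, ?_⟩
    ext i
    fin_cases i <;> simp [h0, h2]
  · right
    refine ⟨v 1 / v 2, ?_⟩
    rw [infinitePoint, Projectivization.mk_eq_mk_iff']
    refine ⟨v 2, ?_⟩
    ext i
    fin_cases i <;> simp [h0, mul_div_cancel₀, h2]

lemma isProjLine_lineX0 : IsProjLine F (lineX0 F) := by
  have hproj : (LinearMap.proj 0 : Module.Dual F (Fin 3 → F)) ≠ 0 := fun e => by
    simpa using LinearMap.congr_fun e ![1, 0, 0]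
  have := Module.Dual.finrank_ker_add_one_of_ne_zero hproj
  rw [Module.finrank_fin_fun] at this
  exact Nat.succ_injective this

lemma IsProjLine.exists_eq_ker {L : Submodule F (Fin 3 → F)} (hL : IsProjLine F L) :
    ∃ l : Module.Dual F (Fin 3 → F), L = LinearMap.ker l := by
  rw [IsProjLine] at hL
  have hlt : L < ⊤ := by
    rw [lt_top_iff_ne_top]
    rintro rfl
    simp at hL
  obtain ⟨l, hl, hle⟩ := Submodule.exists_le_ker_of_lt_top L hlt
  refine ⟨l, Submodule.eq_of_le_of_finrank_eq hle ?_⟩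
  have := Module.Dual.finrank_ker_add_one_of_ne_zero hl
  rw [Module.finrank_fin_fun] at this
  omega

lemma IsProjLine.exists_pointsOn_inter_eq_singleton {L M : Submodule F (Fin 3 → F)}
    (hL : IsProjLine F L) (hM : IsProjLine F M) (hne : L ≠ M) :
    ∃ P, pointsOn L ∩ pointsOn M = {P} := by
  rw [IsProjLine] at hL hM
  have hinf : Module.finrank F ↥(L ⊓ M) = 1 := by
    have hlt : L < L ⊔ M :=
      left_lt_sup.2 fun hML => hne (Submodule.eq_of_le_of_finrank_eq hML (hM.trans hL.symm)).symm
    have hsum := Submodule.finrank_sup_add_finrank_inf_eq L M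
    have hsup := Submodule.finrank_lt_finrank_of_lt hlt
    have hle := Submodule.finrank_le (L ⊔ M)
    rw [Module.finrank_fin_fun] at hle
    omega
  refine ⟨Projectivization.mk'' _ hinf, Set.ext fun P => ?_⟩
  rw [Set.mem_singleton_iff, ← Projectivization.submodule_injective.eq_iff,
    Projectivization.submodule_mk'']
  exact le_inf_iff.symm.trans ⟨fun hle => Submodule.eq_of_le_of_finrank_eq hle
    (P.finrank_submodule.trans hinf.symm), le_of_eq⟩

/-! ### Graphs and their directions -/

/-- The affine points `⟨(1, x, f x)⟩` on the graph of `f`. -/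
def graphPoints (f : F → F) : Set (PGPoint F) :=
  {P | ∃ x : F, P.submodule = Submodule.span F {![1, x, f x]}}

/-- The points `⟨(0, x, f x)⟩` with `x ≠ 0`. For additive `f` these are the directions determined
by the graph of `f`: the points of `X = 0` on the lines joining two of its points. -/
def graphDirections (f : F → F) : Set (PGPoint F) :=
  {P | ∃ x : F, x ≠ 0 ∧ P.submodule = Submodule.span F {![0, x, f x]}}

/-- The points of the line `X = 0` that are not directions of the graph of `f`; this is the set
`N` of the construction. -/
def graphNonDirections (f : F → F) : Set (PGPoint F) :=
  pointsOn (lineX0 F) \ graphDirections f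

/-- The graph of `f` completed by the points of `X = 0` that are not directions of it; this is the
set `A ∪ N` of the construction. -/
def graphCompletion (f : F → F) : Set (PGPoint F) :=
  graphPoints f ∪ graphNonDirections f

lemma graphPoints_eq_range (f : F → F) :
    graphPoints f = Set.range fun x => affinePoint x (f x) := by
  ext P
  simp only [graphPoints, Set.mem_ofPred_eq, Set.mem_range, ← affinePoint_submodule,
    Projectivization.submodule_injective.eq_iff, eq_comm]

lemma affinePoint_mem_graphPoints (f : F → F) (x : F) : affinePoint x (f x) ∈ graphPoints f :=
  ⟨x, affinePoint_submodule _ _⟩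

lemma disjoint_graphPoints_pointsOn_lineX0 (f : F → F) :
    Disjoint (graphPoints f) (pointsOn (lineX0 F)) := by
  rw [graphPoints_eq_range, Set.disjoint_left]
  rintro _ ⟨x, rfl⟩
  exact affinePoint_notMem_lineX0 _ _

lemma mem_graphDirections_of_mem_of_inter_lineX0_eq {L : Submodule F (Fin 3 → F)} {D : PGPoint F}
    (hD : pointsOn L ∩ pointsOn (lineX0 F) = {D}) {f : F → F} {z : F} (hz0 : z ≠ 0)
    (hz : ![0, z, f z] ∈ L) : D ∈ graphDirections f := by
  let Z : PGPoint F := .mk F ![0, z, f z] fun e => hz0 (congrFun e 1)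
  have hZ : Z.submodule = Submodule.span F {![0, z, f z]} := Projectivization.submodule_mk _ _
  have hZD : Z = D := hD.subset ⟨(mem_pointsOn_iff_of_submodule_eq hZ).2 hz,
    (mem_pointsOn_iff_of_submodule_eq hZ).2 (by simp [lineX0])⟩
  exact ⟨z, hz0, hZD ▸ hZ⟩

section LinearGraph

variable {K : Type*} [Field K] [Algebra K F] {L : Submodule F (Fin 3 → F)}

lemma exists_affine_mem_of_forall_direction_notMem [FiniteDimensional K F] (f : F →ₗ[K] F)
    (hL : IsProjLine F L) (hdir : ∀ z, ![0, z, f z] ∈ L → z = 0) :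
    ∃ x, ![1, x, f x] ∈ L := by
  obtain ⟨l, rfl⟩ := hL.exists_eq_ker
  let g : F →ₗ[K] F := l.restrictScalars K ∘ₗ LinearMap.pi ![0, LinearMap.id, f]
  have hg (x : F) : g x = l ![0, x, f x] := by
    simp only [g, LinearMap.comp_apply, LinearMap.restrictScalars_apply]
    congr 1
    ext i
    fin_cases i <;> rfl
  have hinj : Function.Injective g := (injective_iff_map_eq_zero g).2 fun z hz =>
    hdir z (LinearMap.mem_ker.2 ((hg z).symm.trans hz))
  obtain ⟨x, hx⟩ := LinearMap.surjective_of_injective hinj (-l ![1, 0, 0])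
  refine ⟨x, ?_⟩
  have hsplit : ![1, x, f x] = ![1, 0, 0] + ![0, x, f x] := by simp
  rw [LinearMap.mem_ker, hsplit, map_add, ← hg, hx, add_neg_cancel]

lemma add_mem_of_direction_mem (f : F →ₗ[K] F) {x z : F} (hx : ![1, x, f x] ∈ L)
    (hz : ![0, z, f z] ∈ L) : ![1, x + z, f (x + z)] ∈ L := by
  simpa using L.add_mem hx hz

theorem noTangents_graphCompletion [FiniteDimensional K F] (f : F →ₗ[K] F)
    (hf : ¬ ∃! P, P ∈ graphNonDirections f) : NoTangents (graphCompletion f) := by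
  rintro L hL ⟨P, ⟨hPS, hPL⟩, huniq⟩
  rcases eq_or_ne L (lineX0 F) with rfl | hne
  · have hPN := hPS.resolve_left fun hPA =>
      (disjoint_graphPoints_pointsOn_lineX0 f).notMem_of_mem_left hPA hPL
    exact hf ⟨P, hPN, fun Q hQ => huniq Q ⟨Or.inr hQ, hQ.1⟩⟩
  obtain ⟨D, hD⟩ := hL.exists_pointsOn_inter_eq_singleton isProjLine_lineX0 hne
  obtain ⟨hDL, hD0⟩ : D ∈ pointsOn L ∩ pointsOn (lineX0 F) := hD ▸ rfl
  have eq_affinePoint {x : F} (hx : ![1, x, f x] ∈ L) : affinePoint x (f x) = P :=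
    huniq _ ⟨Or.inl (affinePoint_mem_graphPoints f x), affinePoint_mem_pointsOn.2 hx⟩
  by_cases hDdir : D ∈ graphDirections f
  · obtain ⟨z, hz, hDz⟩ := hDdir
    have hzL := (mem_pointsOn_iff_of_submodule_eq hDz).1 hDL
    rcases hPS with ⟨x, hPx⟩ | hPN
    · have hxL := (mem_pointsOn_iff_of_submodule_eq hPx).1 hPL
      have heq := (eq_affinePoint (add_mem_of_direction_mem f hxL hzL)).trans
        (eq_affinePoint hxL).symm
      exact hz (by simpa using (affinePoint_inj.1 heq).1)
    · have hPD : P = D := hD.subset ⟨hPL, hPN.1⟩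
      exact hPN.2 ⟨z, hz, hPD ▸ hDz⟩
  · have hdir (z : F) (hz : ![0, z, f z] ∈ L) : z = 0 := by
      by_contra hz0
      exact hDdir (mem_graphDirections_of_mem_of_inter_lineX0_eq hD hz0 hz)
    obtain ⟨x, hx⟩ := exists_affine_mem_of_forall_direction_notMem f hL hdir
    have hDP : D = P := huniq D ⟨Or.inr ⟨hD0, hDdir⟩, hDL⟩
    exact affinePoint_notMem_lineX0 x (f x) (((eq_affinePoint hx).trans hDP.symm) ▸ hD0)

end LinearGraph

lemma ncard_graphPoints (f : F → F) : (graphPoints f).ncard = Nat.card F := by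
  rw [graphPoints_eq_range, ← Set.image_univ,
    Set.ncard_image_of_injective _ fun x y e => (affinePoint_inj.1 e).1, Set.ncard_univ]

/-! ### Linear functionals -/

lemma exists_ne_zero_dual_apply_eq_zero {K V : Type*} [Field K] [AddCommGroup V] [Module K V]
    (hV : 1 < Module.finrank K V) (φ : Module.Dual K V) : ∃ k, k ≠ 0 ∧ φ k = 0 := by
  have : FiniteDimensional K V := .of_finrank_pos (zero_lt_one.trans hV)
  have hker : LinearMap.ker φ ≠ ⊥ :=
    LinearMap.ker_ne_bot_of_finrank_lt (by rwa [Module.finrank_self])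
  obtain ⟨k, hk, hk0⟩ := (Submodule.ne_bot_iff _).1 hker
  exact ⟨k, hk0, hk⟩

section Functional

variable {K : Type*} [Field K] [Algebra K F]

/-- A `K`-linear functional on `F`, seen as a map from `F` to itself. -/
def functionalEnd (φ : Module.Dual K F) : F →ₗ[K] F :=
  Algebra.linearMap K F ∘ₗ φ

lemma functionalEnd_apply (φ : Module.Dual K F) (x : F) :
    functionalEnd φ x = algebraMap K F (φ x) :=
  rfl

-- `(0, x, φ x)` is proportional to `(0, y, 1)` when `x = φ x • y`; apply `φ` to both sides.
lemma infinitePoint_mem_graphDirections_iff (φ : Module.Dual K F) (y : F) :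
    infinitePoint y ∈ graphDirections (functionalEnd φ) ↔ φ y = 1 := by
  constructor
  · rintro ⟨x, hx, hspan⟩
    have hmem : ![0, x, algebraMap K F (φ x)] ∈ Submodule.span F {![0, y, 1]} := by
      rw [← infinitePoint_submodule, hspan]
      exact Submodule.mem_span_singleton_self _
    obtain ⟨c, hc⟩ := Submodule.mem_span_singleton.1 hmem
    obtain rfl : c = algebraMap K F (φ x) := by simpa using congrFun hc 2
    have hxy : φ x • y = x := by simpa [Algebra.smul_def] using congrFun hc 1
    have hφx : φ x ≠ 0 := fun h => hx (by rw [← hxy, h, zero_smul])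
    have hφ : φ x * φ y = φ x := by rw [← smul_eq_mul, ← map_smul, hxy]
    exact (mul_eq_left₀ hφx).1 hφ
  · intro hy
    refine ⟨y, fun h => ?_, ?_⟩
    · simp [h] at hy
    · rw [infinitePoint_submodule, functionalEnd_apply, hy, map_one]

lemma mem_graphDirections_of_apply_eq_zero {P : PGPoint F} {f : F → F} {k : F} (hk : k ≠ 0)
    (hfk : f k = 0) (hP : P.submodule = Submodule.span F {![0, 1, 0]}) :
    P ∈ graphDirections f := by
  refine ⟨k, hk, ?_⟩
  rw [hP, hfk, ← Submodule.span_singleton_smul_eq hk.isUnit]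
  simp

lemma graphNonDirections_functionalEnd (hK : 1 < Module.finrank K F)
    (φ : Module.Dual K F) :
    graphNonDirections (functionalEnd φ) = infinitePoint '' {y | φ y = 1}ᶜ := by
  ext P
  constructor
  · rintro ⟨hP0, hPdir⟩
    obtain hP | ⟨y, rfl⟩ := submodule_eq_or_eq_infinitePoint_of_mem_lineX0 hP0
    · obtain ⟨k, hk, hφk⟩ := exists_ne_zero_dual_apply_eq_zero hK φ
      exact absurd (mem_graphDirections_of_apply_eq_zero hk
        (by rw [functionalEnd_apply, hφk, map_zero]) hP) hPdir
    · exact ⟨y, fun hy => hPdir ((infinitePoint_mem_graphDirections_iff φ y).2 hy), rfl⟩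
  · rintro ⟨y, hy, rfl⟩
    refine ⟨infinitePoint_mem_lineX0 y, fun h => hy ?_⟩
    exact (infinitePoint_mem_graphDirections_iff φ y).1 h

theorem noTangents_graphCompletion_functionalEnd (hK : 1 < Module.finrank K F)
    (φ : Module.Dual K F) : NoTangents (graphCompletion (functionalEnd φ)) := by
  have : FiniteDimensional K F := .of_finrank_pos (zero_lt_one.trans hK)
  refine noTangents_graphCompletion _ fun hN => ?_
  obtain ⟨k, hk, hφk⟩ := exists_ne_zero_dual_apply_eq_zero hK φ
  rw [graphNonDirections_functionalEnd hK] at hN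
  have heq : infinitePoint k = infinitePoint 0 :=
    hN.unique ⟨k, by simp [hφk], rfl⟩ ⟨0, by simp, rfl⟩
  exact hk (infinitePoint_injective heq)

end Functional

lemma ncard_fiber_mul_card_of_surjective {V W : Type*} [AddGroup V] [AddGroup W] {f : V →+ W}
    (hf : Function.Surjective f) (w : W) : {v | f v = w}.ncard * Nat.card W = Nat.card V := by
  have hfiber : {v | f v = w}.ncard = Nat.card f.ker :=
    Nat.card_congr (AddMonoidHom.fiberEquivKerOfSurjective hf w)
  have hquot : Nat.card (V ⧸ f.ker) = Nat.card W :=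
    Nat.card_congr (QuotientAddGroup.quotientKerEquivOfSurjective f hf).toEquiv
  rw [hfiber, AddSubgroup.card_eq_card_quotient_mul_card_addSubgroup f.ker, hquot, mul_comm]

theorem ncard_graphCompletion_functionalEnd [Finite F] {K : Type*} [Field K] [Algebra K F]
    (hK : 1 < Module.finrank K F) {φ : Module.Dual K F} (hφ : φ ≠ 0) :
    (graphCompletion (functionalEnd φ)).ncard = 2 * Nat.card F - Nat.card F / Nat.card K := by
  have : Finite K := Finite.of_injective _ (algebraMap K F).injective
  have hfiber : {y | φ y = 1}.ncard = Nat.card F / Nat.card K :=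
    Nat.eq_div_of_mul_eq_left Nat.card_pos.ne'
      (ncard_fiber_mul_card_of_surjective (f := φ.toAddMonoidHom) (LinearMap.surjective hφ) 1)
  have hle : Nat.card F / Nat.card K ≤ Nat.card F := Nat.div_le_self _ _
  have hN : (graphNonDirections (functionalEnd φ)).ncard =
      Nat.card F - Nat.card F / Nat.card K := by
    rw [graphNonDirections_functionalEnd hK,
      Set.ncard_image_of_injective _ infinitePoint_injective, Set.ncard_compl, hfiber]
  have hdisj : Disjoint (graphPoints (functionalEnd φ))
      (graphNonDirections (functionalEnd φ)) :=
    (disjoint_graphPoints_pointsOn_lineX0 _).mono_right Set.sdiff_subset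
  rw [graphCompletion, Set.ncard_union_eq hdisj, ncard_graphPoints, hN]
  omega

/-! ### The trace -/

lemma exists_subfield_card_eq_of_card_eq_pow [Finite F] {r h : ℕ} (hcard : Nat.card F = r ^ h) :
    ∃ K : Subfield F, Nat.card K = r ∧ Module.finrank K F = h := by
  have := Fintype.ofFinite F
  have hh : h ≠ 0 := by
    rintro rfl
    exact Finite.one_lt_card.ne' (hcard.trans (pow_zero r))
  have hr : IsPrimePow r := by
    rw [← isPrimePow_pow_iff hh, ← hcard, Nat.card_eq_fintype_card]
    exact FiniteField.isPrimePow_card F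
  obtain ⟨p, e, hp, he, rfl⟩ := (isPrimePow_nat_iff r).1 hr
  rw [← pow_mul] at hcard
  have : Fact p.Prime := ⟨hp⟩
  have : CharP F p :=
    charP_of_card_eq_prime_pow (Nat.card_eq_fintype_card.symm.trans hcard)
  let _ : Algebra (ZMod p) F := ZMod.algebra F p
  have hfin : Module.finrank (ZMod p) F = e * h :=
    Nat.pow_right_injective hp.two_le ((FiniteField.pow_finrank_eq_natCard p F).trans hcard)
  obtain ⟨i⟩ : Nonempty (GaloisField p e →ₐ[ZMod p] F) := by
    apply FiniteField.nonempty_algHom_of_finrank_dvd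
    rw [GaloisField.finrank p he.ne', hfin]
    exact dvd_mul_right e h
  have hK : Nat.card i.toRingHom.fieldRange = p ^ e := by
    rw [← GaloisField.card p e he.ne']
    exact (Nat.card_congr (Equiv.ofInjective i i.toRingHom.injective)).symm
  refine ⟨i.toRingHom.fieldRange, hK, ?_⟩
  have hpow := Module.natCard_eq_pow_finrank (K := i.toRingHom.fieldRange) (V := F)
  rw [hK, hcard, pow_mul] at hpow
  exact (Nat.pow_right_injective hr.two_le hpow).symm

lemma trMap_eq_functionalEnd_trace [Finite F] (K : Subfield F) :
    trMap F (Nat.card K) (Module.finrank K F) = functionalEnd (Algebra.trace K F) := by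
  ext x
  rw [functionalEnd_apply, FiniteField.algebraMap_trace_eq_sum_pow, trMap]

theorem stmt_17_general [Finite F] (r h : ℕ) (hh : 2 ≤ h) (hcard : Nat.card F = r ^ h) :
    NoTangents (graphCompletion (trMap F r h)) ∧
      (graphCompletion (trMap F r h)).ncard = 2 * r ^ h - r ^ h / r := by
  obtain ⟨K, rfl, rfl⟩ := exists_subfield_card_eq_of_card_eq_pow hcard
  rw [trMap_eq_functionalEnd_trace, ← hcard]
  exact ⟨noTangents_graphCompletion_functionalEnd hh _,
    ncard_graphCompletion_functionalEnd hh (Algebra.trace_ne_zero K F)⟩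

/-- for `q = p^h`, `p` an odd prime, `h ≥ 2`, the set
`A = {⟨(1,x,Tr(x))⟩ : x ∈ F_q}` together with the set `N` of points of the line
`X = 0` not of the form `⟨(0,x,Tr(x))⟩` (`x ≠ 0`) is a set without tangents of
size `2q - q/p`. -/
theorem stmt_17 [Fintype F] (p h : ℕ) (hp : p.Prime) (hodd : Odd p) (hh : 2 ≤ h)
    (hcard : Fintype.card F = p ^ h) :
    NoTangents
      ({P : PGPoint F | ∃ x : F, P.submodule = Submodule.span F {![1, x, trMap F p h x]}} ∪
        (pointsOn (lineX0 F) \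
          {P : PGPoint F | ∃ x : F, x ≠ 0 ∧
            P.submodule = Submodule.span F {![0, x, trMap F p h x]}})) ∧
    ({P : PGPoint F | ∃ x : F, P.submodule = Submodule.span F {![1, x, trMap F p h x]}} ∪
        (pointsOn (lineX0 F) \
          {P : PGPoint F | ∃ x : F, x ≠ 0 ∧
            P.submodule = Submodule.span F {![0, x, trMap F p h x]}})).ncard
      = 2 * p ^ h - p ^ h / p :=
  stmt_17_general p h hh (Nat.card_eq_fintype_card.trans hcard)
end
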